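/- arXiv:2305.02098 — 2 statements merged into one kernel-verified Lean document; each statement's English description precedes it below -/
import Mathlib

section
/- Let φ satisfy: φ : ℝ → [0,∞) continuous, C² on (0,∞), φ = 0 on (−∞,0], φ > 0 on (0,∞), φ(η) ≥ Cη^k near 0 for some 0 < k < 3/2, and the normalization 4π ∫₀¹ φ(η)(1−η)³ dη = 1. For κ > 0 let y_κ be the (massive) Einstein–Vlasov steady state solution with y_κ(0) = κ (with profile functions g, h built from φ), and let y*_κ be the solution of the massless equation (with g*(y) = e^{4y}, h*(y) = (1/3)e^{4y}) with y*_κ(0) = κ. Then there exists a constant C > 0 such that for all κ > 0 and all r ≥ 0: |y_κ(r) − y*_κ(r)| ≤ C e^{2κ} (r² + e^{4κ} r⁴) exp( C (e^{4κ} r² + e^{8κ} r⁴) ). -/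
/-!
Write `g(y) = e^{4y} γ(y)` and `h(y) = (1/3) e^{4y} χ(y)` (`gamEV`, `chiEV`). The normalization of
`φ` gives `0 ≤ 1 - γ(y), 1 - χ(y) ≤ const · e^{-2y}`, so on `y ≤ κ` the massive profiles differ
from the massless ones by `O(e^{2κ})` (`gamEV_defect`, `chiEV_defect`). Both solutions decrease,
hence stay below `κ`.

The factor `(1 - 2m/r)⁻¹` is controlled by a Buchdahl-type bound `2m/r ≤ 9/10` (`buchdahl`), which
uses only that `γ` is nonnegative and nondecreasing and the pressure is nonnegative. If
`2m(x)/x = 9/10`, then `m(t)/t³ ≥ m(x)/x³` for `t ≤ x` feeds the equation for `y` to give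
`e^{4y(t)} ≥ 10 e^{4y(x)} (1 - (9/10) t²/x²)`. The mass inside `x` then forces
`4π x² ρ(x) < m(x)/x`, i.e. `m/r` decreases at `x`, so the value `9/10` cannot be crossed.

Consequently, if `|y - y*| ≤ b` on `[0,r]`, then
`|y'(r) - y*'(r)| ≤ K (r + e^{4κ} r³)(e^{2κ} + e^{4κ} b)` (`rhs_diff`). With
`Z(r) = e^{4κ} r² + e^{8κ} r⁴`, the functions `B(r) = e^{-2κ} ((1+ε) e^{K Z(r)} - 1)` are
increasing and dominate this inequality, so `|y - y*| < B` by continuous induction (`barrier`).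
Letting `ε → 0` and using `e^t - 1 ≤ t e^t` gives the claim.
-/

open MeasureTheory Set Filter Topology
open scoped ENNReal

noncomputable section

/-- Einstein–Vlasov density profile `g`. -/
def gEV (φ : ℝ → ℝ) (y : ℝ) : ℝ :=
  if 0 < y then 4 * Real.pi * Real.exp (4 * y) *
    ∫ η in (0 : ℝ)..(1 - Real.exp (-y)),
      φ η * (1 - η) ^ 2 * Real.sqrt ((1 - η) ^ 2 - Real.exp (-2 * y))
  else 0

/-- Einstein–Vlasov pressure profile `h`. -/
def hEV (φ : ℝ → ℝ) (y : ℝ) : ℝ :=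
  if 0 < y then 4 * Real.pi / 3 * Real.exp (4 * y) *
    ∫ η in (0 : ℝ)..(1 - Real.exp (-y)),
      φ η * ((1 - η) ^ 2 - Real.exp (-2 * y)) ^ ((3 : ℝ) / 2)
  else 0

/-- The mass function `m(r) = 4π ∫₀^r g(y(s)) s² ds`. -/
def mEV (φ : ℝ → ℝ) (y : ℝ → ℝ) (r : ℝ) : ℝ :=
  4 * Real.pi * ∫ s in (0 : ℝ)..r, gEV φ (y s) * s ^ 2

/-- `y` solves the (massive) stationary Einstein–Vlasov equation with `y(0) = κ`. -/
def IsEVSteady (φ : ℝ → ℝ) (κ : ℝ) (y : ℝ → ℝ) : Prop :=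
  ContDiffOn ℝ 2 y (Ici 0) ∧ y 0 = κ ∧
  ∀ r : ℝ, 0 < r → 2 * mEV φ y r < r ∧
    deriv y r = -(1 - 2 * mEV φ y r / r)⁻¹ *
      (mEV φ y r / r ^ 2 + 4 * Real.pi * r * hEV φ (y r))

/-- The massless mass function `m*(r) = 4π ∫₀^r s² e^{4y(s)} ds`. -/
def mStar (y : ℝ → ℝ) (r : ℝ) : ℝ :=
  4 * Real.pi * ∫ s in (0 : ℝ)..r, Real.exp (4 * y s) * s ^ 2

/-- `y` solves the massless steady state equation (`g* = e^{4y}`, `h* = e^{4y}/3`)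
with `y(0) = κ`. -/
def IsMasslessSteady (κ : ℝ) (y : ℝ → ℝ) : Prop :=
  ContDiffOn ℝ 1 y (Ici 0) ∧ y 0 = κ ∧
  ∀ r : ℝ, 0 < r → 2 * mStar y r < r ∧
    deriv y r = -(1 - 2 * mStar y r / r)⁻¹ *
      (mStar y r / r ^ 2 + 4 * Real.pi * r * (1 / 3 * Real.exp (4 * y r)))

/-! ### Density and pressure profiles -/

/-- The lapse-normalized density `e^{-4y} g(y)`, as an integral over a fixed interval: the cutoff
at `1 - e^{-y}` is supplied by `Real.sqrt` vanishing on negative numbers. -/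
def gamEV (φ : ℝ → ℝ) (y : ℝ) : ℝ :=
  4 * Real.pi * ∫ η in (0 : ℝ)..1,
    φ η * (1 - η) ^ 2 * Real.sqrt ((1 - η) ^ 2 - Real.exp (-2 * y))

/-- The normalized pressure `3 e^{-4y} h(y)`, with the power `3/2` of `T` written as `T √T`, which
vanishes for negative `T`. -/
def chiEV (φ : ℝ → ℝ) (y : ℝ) : ℝ :=
  4 * Real.pi * ∫ η in (0 : ℝ)..1,
    φ η * (((1 - η) ^ 2 - Real.exp (-2 * y)) * Real.sqrt ((1 - η) ^ 2 - Real.exp (-2 * y)))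

lemma arg_nonpos {y η : ℝ} (h1 : 1 - Real.exp (-y) ≤ η) (h2 : η ≤ 1) :
    (1 - η) ^ 2 - Real.exp (-2 * y) ≤ 0 := by
  have : Real.exp (-2 * y) = Real.exp (-y) ^ 2 := by
    rw [← Real.exp_nat_mul]; congr 1; push_cast; ring
  rw [this]
  nlinarith [Real.exp_pos (-y)]

lemma arg_nonneg {y η : ℝ} (h1 : η ≤ 1 - Real.exp (-y)) :
    0 ≤ (1 - η) ^ 2 - Real.exp (-2 * y) := by
  have : Real.exp (-2 * y) = Real.exp (-y) ^ 2 := by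
    rw [← Real.exp_nat_mul]; congr 1; push_cast; ring
  rw [this]
  nlinarith [Real.exp_pos (-y)]

lemma cutoff_integral {f : ℝ → ℝ} {y : ℝ} (hf : Continuous f)
    (h0 : ∀ η, 1 - Real.exp (-y) ≤ η → η ≤ 1 → f η = 0) :
    ∫ η in (0 : ℝ)..(1 - Real.exp (-y)), f η = ∫ η in (0 : ℝ)..1, f η := by
  have hz : ∫ η in (1 - Real.exp (-y))..1, f η = 0 := by
    rw [intervalIntegral.integral_congr (g := fun _ => 0)]
    · simp
    · intro η hη
      rw [uIcc_of_le (by linarith [Real.exp_pos (-y)])] at hη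
      exact h0 η hη.1 hη.2
  rw [← intervalIntegral.integral_add_adjacent_intervals
    (hf.intervalIntegrable 0 (1 - Real.exp (-y))) (hf.intervalIntegrable _ 1), hz, add_zero]

lemma gEV_eq {φ : ℝ → ℝ} (hφ : Continuous φ) (y : ℝ) :
    gEV φ y = Real.exp (4 * y) * gamEV φ y := by
  have key : ∀ η, 1 - Real.exp (-y) ≤ η → η ≤ 1 →
      φ η * (1 - η) ^ 2 * Real.sqrt ((1 - η) ^ 2 - Real.exp (-2 * y)) = 0 := by
    intro η h1 h2
    rw [Real.sqrt_eq_zero_of_nonpos (arg_nonpos h1 h2), mul_zero]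
  unfold gEV gamEV
  split_ifs with hy
  · rw [cutoff_integral (by fun_prop) key]; ring
  · rw [intervalIntegral.integral_congr (g := fun _ => 0)]
    · simp
    · intro η hη
      rw [uIcc_of_le zero_le_one] at hη
      have : 1 ≤ Real.exp (-y) := Real.one_le_exp (by linarith)
      exact key η (by linarith [hη.1]) hη.2

lemma hEV_eq {φ : ℝ → ℝ} (hφ : Continuous φ) (y : ℝ) :
    hEV φ y = Real.exp (4 * y) / 3 * chiEV φ y := by
  have key : ∀ η, 1 - Real.exp (-y) ≤ η → η ≤ 1 →
      φ η * (((1 - η) ^ 2 - Real.exp (-2 * y)) *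
        Real.sqrt ((1 - η) ^ 2 - Real.exp (-2 * y))) = 0 := by
    intro η h1 h2
    rw [Real.sqrt_eq_zero_of_nonpos (arg_nonpos h1 h2), mul_zero, mul_zero]
  unfold hEV chiEV
  split_ifs with hy
  · rw [← cutoff_integral (by fun_prop) key]
    have : ∫ η in (0 : ℝ)..(1 - Real.exp (-y)),
        φ η * ((1 - η) ^ 2 - Real.exp (-2 * y)) ^ ((3 : ℝ) / 2) =
        ∫ η in (0 : ℝ)..(1 - Real.exp (-y)), φ η * (((1 - η) ^ 2 - Real.exp (-2 * y)) *
        Real.sqrt ((1 - η) ^ 2 - Real.exp (-2 * y))) := by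
      apply intervalIntegral.integral_congr
      intro η hη
      have h1 : Real.exp (-y) ≤ 1 := Real.exp_le_one_iff.2 (by linarith)
      rw [uIcc_of_le (by linarith)] at hη
      have hT := arg_nonneg hη.2
      simp only
      congr 1
      rw [Real.sqrt_eq_rpow, show (3 : ℝ) / 2 = 1 + 1 / 2 by norm_num,
        Real.rpow_add_of_nonneg hT (by norm_num) (by norm_num), Real.rpow_one]
    rw [this]; ring
  · rw [intervalIntegral.integral_congr (g := fun _ => 0)]
    · simp
    · intro η hη
      rw [uIcc_of_le zero_le_one] at hη
      have : 1 ≤ Real.exp (-y) := Real.one_le_exp (by linarith)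
      exact key η (by linarith [hη.1]) hη.2

lemma gamEV_continuous {φ : ℝ → ℝ} (hφ : Continuous φ) : Continuous (gamEV φ) := by
  unfold gamEV
  refine continuous_const.mul ?_
  apply intervalIntegral.continuous_parametric_intervalIntegral_of_continuous'
  fun_prop

lemma gamEV_mono {φ : ℝ → ℝ} (hφ : Continuous φ) (hpos : ∀ η, 0 ≤ φ η) :
    Monotone (gamEV φ) := by
  intro a b hab
  unfold gamEV
  refine mul_le_mul_of_nonneg_left ?_ (by positivity)
  apply intervalIntegral.integral_mono_on zero_le_one
  · exact Continuous.intervalIntegrable (by fun_prop) _ _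
  · exact Continuous.intervalIntegrable (by fun_prop) _ _
  · intro η _
    refine mul_le_mul_of_nonneg_left ?_ (mul_nonneg (hpos η) (sq_nonneg _))
    apply Real.sqrt_le_sqrt
    have : Real.exp (-2 * b) ≤ Real.exp (-2 * a) := Real.exp_le_exp.2 (by linarith)
    linarith

lemma gamEV_nonneg {φ : ℝ → ℝ} (hpos : ∀ η, 0 ≤ φ η) (y : ℝ) : 0 ≤ gamEV φ y := by
  unfold gamEV
  refine mul_nonneg (by positivity) (intervalIntegral.integral_nonneg zero_le_one ?_)
  intro η _
  exact mul_nonneg (mul_nonneg (hpos η) (sq_nonneg _)) (Real.sqrt_nonneg _)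

lemma mul_sqrt_self_nonneg (t : ℝ) : 0 ≤ t * Real.sqrt t := by
  rcases le_total 0 t with h | h
  · positivity
  · rw [Real.sqrt_eq_zero_of_nonpos h, mul_zero]

lemma chiEV_nonneg {φ : ℝ → ℝ} (hpos : ∀ η, 0 ≤ φ η) (y : ℝ) : 0 ≤ chiEV φ y := by
  unfold chiEV
  refine mul_nonneg (by positivity) (intervalIntegral.integral_nonneg zero_le_one ?_)
  intro η _
  exact mul_nonneg (hpos η) (mul_sqrt_self_nonneg _)

lemma sqrt_aux {a b : ℝ} (ha : 0 ≤ a) (hb : 0 ≤ b) :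
    Real.sqrt (a ^ 2 - b) ≤ a ∧ a ^ 2 - b ≤ a * Real.sqrt (a ^ 2 - b) := by
  have h1 : Real.sqrt (a ^ 2 - b) ≤ a := by
    rw [Real.sqrt_le_left ha]; linarith
  refine ⟨h1, ?_⟩
  rcases le_total 0 (a ^ 2 - b) with h | h
  · nlinarith [Real.sq_sqrt h, Real.sqrt_nonneg (a ^ 2 - b)]
  · exact h.trans (mul_nonneg ha (Real.sqrt_nonneg _))

/-- The defect from the massless profile: `0 ≤ 1 - γ(y) ≤ L e^{-2y}`, with
`L = 4π ∫₀¹ φ(η)(1-η) dη`. -/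
lemma gamEV_defect {φ : ℝ → ℝ} (hφ : Continuous φ) (hpos : ∀ η, 0 ≤ φ η)
    (hnorm : 4 * Real.pi * ∫ η in (0 : ℝ)..1, φ η * (1 - η) ^ 3 = 1) (y : ℝ) :
    gamEV φ y ≤ 1 ∧
      1 - gamEV φ y ≤ 4 * Real.pi * (∫ η in (0 : ℝ)..1, φ η * (1 - η)) * Real.exp (-2 * y) := by
  have e : 1 - gamEV φ y = 4 * Real.pi * ∫ η in (0 : ℝ)..1, (φ η * (1 - η) ^ 3 -
      φ η * (1 - η) ^ 2 * Real.sqrt ((1 - η) ^ 2 - Real.exp (-2 * y))) := by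
    rw [intervalIntegral.integral_sub (Continuous.intervalIntegrable (by fun_prop) _ _)
      (Continuous.intervalIntegrable (by fun_prop) _ _), mul_sub, hnorm, gamEV]
  constructor
  · rw [← sub_nonneg, e]
    refine mul_nonneg (by positivity) (intervalIntegral.integral_nonneg zero_le_one ?_)
    intro η hη
    have h := sqrt_aux (sub_nonneg.2 hη.2) (Real.exp_pos (-2 * y)).le
    have := mul_le_mul_of_nonneg_left h.1 (mul_nonneg (hpos η) (sq_nonneg (1 - η)))
    nlinarith
  · rw [e, mul_assoc (4 * Real.pi), ← intervalIntegral.integral_mul_const]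
    refine mul_le_mul_of_nonneg_left ?_ (by positivity)
    apply intervalIntegral.integral_mono_on zero_le_one
    · exact Continuous.intervalIntegrable (by fun_prop) _ _
    · exact Continuous.intervalIntegrable (by fun_prop) _ _
    · intro η hη
      have h := sqrt_aux (sub_nonneg.2 hη.2) (Real.exp_pos (-2 * y)).le
      have := mul_le_mul_of_nonneg_left h.2 (mul_nonneg (hpos η) (sub_nonneg.2 hη.2))
      nlinarith

/-- The defect from the massless pressure: `0 ≤ 1 - χ(y) ≤ 2 L e^{-2y}`. -/
lemma chiEV_defect {φ : ℝ → ℝ} (hφ : Continuous φ) (hpos : ∀ η, 0 ≤ φ η)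
    (hnorm : 4 * Real.pi * ∫ η in (0 : ℝ)..1, φ η * (1 - η) ^ 3 = 1) (y : ℝ) :
    chiEV φ y ≤ 1 ∧ 1 - chiEV φ y ≤
      2 * (4 * Real.pi * (∫ η in (0 : ℝ)..1, φ η * (1 - η)) * Real.exp (-2 * y)) := by
  have e : 1 - chiEV φ y = 4 * Real.pi * ∫ η in (0 : ℝ)..1, (φ η * (1 - η) ^ 3 -
      φ η * (((1 - η) ^ 2 - Real.exp (-2 * y)) *
        Real.sqrt ((1 - η) ^ 2 - Real.exp (-2 * y)))) := by
    rw [intervalIntegral.integral_sub (Continuous.intervalIntegrable (by fun_prop) _ _)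
      (Continuous.intervalIntegrable (by fun_prop) _ _), mul_sub, hnorm, chiEV]
  have key : ∀ η ∈ Icc (0 : ℝ) 1,
      ((1 - η) ^ 2 - Real.exp (-2 * y)) * Real.sqrt ((1 - η) ^ 2 - Real.exp (-2 * y))
        ≤ (1 - η) ^ 3 ∧
      (1 - η) ^ 3 - ((1 - η) ^ 2 - Real.exp (-2 * y)) *
        Real.sqrt ((1 - η) ^ 2 - Real.exp (-2 * y)) ≤ 2 * ((1 - η) * Real.exp (-2 * y)) := by
    intro η hη
    have ha : 0 ≤ 1 - η := sub_nonneg.2 hη.2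
    have hb := Real.exp_pos (-2 * y)
    obtain ⟨h1, h2⟩ := sqrt_aux ha hb.le
    have h3 := Real.sqrt_nonneg ((1 - η) ^ 2 - Real.exp (-2 * y))
    generalize Real.sqrt ((1 - η) ^ 2 - Real.exp (-2 * y)) = S at *
    generalize Real.exp (-2 * y) = b at *
    generalize 1 - η = a at *
    constructor
    · nlinarith [mul_le_mul_of_nonneg_left h1 (sq_nonneg a), mul_nonneg hb.le h3]
    · nlinarith [mul_le_mul_of_nonneg_left h2 ha, mul_le_mul_of_nonneg_left h1 hb.le]
  constructor
  · rw [← sub_nonneg, e]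
    refine mul_nonneg (by positivity) (intervalIntegral.integral_nonneg zero_le_one ?_)
    intro η hη
    have := mul_le_mul_of_nonneg_left (key η hη).1 (hpos η)
    linarith
  · have e2 : ∀ J E : ℝ, 2 * (4 * Real.pi * J * E) = 4 * Real.pi * (2 * (J * E)) := by
      intros; ring
    rw [e, e2, ← intervalIntegral.integral_mul_const,
      ← intervalIntegral.integral_const_mul (2 : ℝ)]
    refine mul_le_mul_of_nonneg_left ?_ (by positivity)
    apply intervalIntegral.integral_mono_on zero_le_one
    · exact Continuous.intervalIntegrable (by fun_prop) _ _
    · exact Continuous.intervalIntegrable (by fun_prop) _ _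
    · intro η hη
      have := mul_le_mul_of_nonneg_left (key η hη).2 (hpos η)
      nlinarith

/-! ### Buchdahl-type bound -/

/-- For nonnegative mass `m` and pressure `P`, the equation makes `y` nonincreasing. -/
lemma steady_anti {y m P : ℝ → ℝ} (hy : ContinuousOn y (Ici 0))
    (hd : ∀ r > 0, DifferentiableAt ℝ y r) (hP : ∀ r, 0 ≤ P r) (hm : ∀ r > 0, 0 ≤ m r)
    (heq : ∀ r > 0, 2 * m r < r ∧
      deriv y r = -(1 - 2 * m r / r)⁻¹ * (m r / r ^ 2 + 4 * Real.pi * r * P r)) :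
    AntitoneOn y (Ici 0) := by
  apply antitoneOn_of_deriv_nonpos (convex_Ici 0) hy
  · rw [interior_Ici]
    intro r hr
    exact (hd r hr).differentiableWithinAt
  · rw [interior_Ici]
    intro r (hr : 0 < r)
    obtain ⟨h1, h2⟩ := heq r hr
    have h3 : 0 < 1 - 2 * m r / r := by
      rw [sub_pos, div_lt_one hr]; exact h1
    have h4 := hm r hr
    have h5 := hP r
    rw [h2, neg_mul, neg_nonpos]
    positivity

lemma mass_nonneg {ρ : ℝ → ℝ} (hρ : ∀ s, 0 ≤ ρ s) {r : ℝ} (hr : 0 ≤ r) :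
    0 ≤ 4 * Real.pi * ∫ s in (0 : ℝ)..r, ρ s * s ^ 2 :=
  mul_nonneg (by positivity) (intervalIntegral.integral_nonneg hr
    fun s _ => mul_nonneg (hρ s) (sq_nonneg s))

/-- For a density that decreases in the radius, `m(t)/t³` decreases in `t`. -/
lemma mass_cube {ρ : ℝ → ℝ} (hc : Continuous ρ) (ha : AntitoneOn ρ (Ici 0))
    {t x : ℝ} (ht : 0 < t) (htx : t ≤ x) :
    (4 * Real.pi * ∫ s in (0 : ℝ)..x, ρ s * s ^ 2) * t ^ 3 ≤
      (4 * Real.pi * ∫ s in (0 : ℝ)..t, ρ s * s ^ 2) * x ^ 3 := by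
  have sc : ∀ a : ℝ, ∫ s in (0 : ℝ)..a, ρ s * s ^ 2 =
      a ^ 3 * ∫ u in (0 : ℝ)..1, ρ (a * u) * u ^ 2 := by
    intro a
    have := intervalIntegral.mul_integral_comp_mul_left (a := 0) (b := 1)
      (f := fun s => ρ s * s ^ 2) a
    rw [mul_zero, mul_one] at this
    rw [← this, ← intervalIntegral.integral_const_mul, ← intervalIntegral.integral_const_mul]
    apply intervalIntegral.integral_congr
    intro u _
    simp only
    ring
  have hx : 0 < x := ht.trans_le htx
  have : ∫ u in (0 : ℝ)..1, ρ (x * u) * u ^ 2 ≤ ∫ u in (0 : ℝ)..1, ρ (t * u) * u ^ 2 := by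
    apply intervalIntegral.integral_mono_on zero_le_one
    · exact Continuous.intervalIntegrable (by fun_prop) _ _
    · exact Continuous.intervalIntegrable (by fun_prop) _ _
    · intro u hu
      refine mul_le_mul_of_nonneg_right ?_ (sq_nonneg u)
      exact ha (mul_nonneg ht.le hu.1) (mul_nonneg hx.le hu.1)
        (mul_le_mul_of_nonneg_right htx hu.1)
  rw [sc x, sc t]
  have h0 : 0 ≤ 4 * Real.pi * (x ^ 3 * t ^ 3) := by positivity
  nlinarith [mul_le_mul_of_nonneg_left this h0]

/-- A Buchdahl-type bound. At a radius `x` with `2 m(x)/x = 9/10`, monotonicity of `m(t)/t³`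
makes `e^{-4y(t)} (1 - (9/10) t²/x²)` nondecreasing on `[0,x]`, so the interior density exceeds
the density at `x` by so much that `4π x² ρ(x) < m(x)/x`, i.e. `m/r` is decreasing at `x`; hence
the value `9/10` is never exceeded. -/
lemma buchdahl {γ y P : ℝ → ℝ} (hγc : Continuous γ) (hγm : Monotone γ) (hγ0 : ∀ z, 0 ≤ γ z)
    (hy : ContinuousOn y (Ici 0))
    (hd : ∀ r > 0, DifferentiableAt ℝ y r) (hP : ∀ r, 0 ≤ P r) {m : ℝ → ℝ}
    (hm : ∀ r, m r = 4 * Real.pi * ∫ s in (0 : ℝ)..r, Real.exp (4 * y s) * γ (y s) * s ^ 2)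
    (heq : ∀ r > 0, 2 * m r < r ∧
      deriv y r = -(1 - 2 * m r / r)⁻¹ * (m r / r ^ 2 + 4 * Real.pi * r * P r)) :
    ∀ r, 0 ≤ r → m r ≤ 9 / 20 * r := by
  have hm0 : ∀ r > 0, 0 ≤ m r := fun r hr => by
    rw [hm]
    exact mass_nonneg (ρ := fun s => Real.exp (4 * y s) * γ (y s))
      (fun s => mul_nonneg (Real.exp_pos _).le (hγ0 _)) hr.le
  have hanti := steady_anti hy hd hP hm0 heq
  -- `y` is only controlled on `[0,∞)`, so the density is extended by its central value.
  set ρ : ℝ → ℝ := fun s => Real.exp (4 * y (max s 0)) * γ (y (max s 0)) with hρ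
  have hyc : Continuous fun s => y (max s 0) :=
    hy.comp_continuous (by fun_prop) fun s => le_max_right s 0
  have hρc : Continuous ρ :=
    (Real.continuous_exp.comp (continuous_const.mul hyc)).mul (hγc.comp hyc)
  have hρ0 : ∀ s, 0 ≤ ρ s := fun s => mul_nonneg (Real.exp_pos _).le (hγ0 _)
  have hρe : ∀ s, 0 ≤ s → ρ s = Real.exp (4 * y s) * γ (y s) := by
    intro s hs
    simp only [hρ, max_eq_left hs]
  have hmρ : ∀ r, 0 ≤ r → m r = 4 * Real.pi * ∫ s in (0 : ℝ)..r, ρ s * s ^ 2 := by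
    intro r hr
    rw [hm]
    congr 1
    apply intervalIntegral.integral_congr
    intro s hs
    rw [uIcc_of_le hr] at hs
    simp only [hρe s hs.1]
  have hρa : AntitoneOn ρ (Ici 0) := by
    intro s hs t ht hst
    rw [hρe s hs, hρe t ht]
    have := hanti hs ht hst
    exact mul_le_mul (Real.exp_le_exp.2 (by linarith)) (hγm this) (hγ0 _) (Real.exp_pos _).le
  have hder : ∀ x, HasDerivAt (fun r => 4 * Real.pi * (∫ s in (0 : ℝ)..r, ρ s * s ^ 2)
      - 9 / 20 * r) (4 * Real.pi * (ρ x * x ^ 2) - 9 / 20 * 1) x := by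
    intro x
    have hc : Continuous fun s => ρ s * s ^ 2 := by fun_prop
    exact ((hc.integral_hasStrictDerivAt 0 x).hasDerivAt.const_mul _).sub
      ((hasDerivAt_id x).const_mul _)
  intro R hR
  have main := image_le_of_deriv_right_lt_deriv_boundary (a := 0) (b := R)
    (B := fun _ => 0) (B' := fun _ => 0)
    (fun x _ => (hder x).continuousAt.continuousWithinAt)
    (fun x _ => (hder x).hasDerivWithinAt) (by simp) (fun x => hasDerivAt_const x 0)
    ?_ (right_mem_Icc.2 hR)
  · rw [hmρ R hR]; linarith
  intro x hx hfx
  rcases hx.1.eq_or_lt with h0 | hx0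
  · rw [← h0]; norm_num
  change 4 * Real.pi * (∫ s in (0 : ℝ)..x, ρ s * s ^ 2) - 9 / 20 * x = 0 at hfx
  have hmx : m x = 9 / 20 * x := by rw [hmρ x hx0.le]; linarith
  have hmt : ∀ t, 0 < t → t ≤ x → 9 / 20 * t ^ 3 ≤ m t * x ^ 2 := by
    intro t ht htx
    have h := mass_cube hρc hρa ht htx
    rw [← hmρ x hx0.le, ← hmρ t ht.le, hmx] at h
    have : x * (9 / 20 * t ^ 3) ≤ x * (m t * x ^ 2) := by nlinarith
    exact le_of_mul_le_mul_left this hx0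
  have hE : MonotoneOn (fun t => Real.exp (-4 * y t) * (1 - 9 / 10 * (t / x) ^ 2))
      (Icc 0 x) := by
    have hE' : ∀ t > 0, HasDerivAt
        (fun t => Real.exp (-4 * y t) * (1 - 9 / 10 * (t / x) ^ 2))
        (Real.exp (-4 * y t) * (-4 * deriv y t) * (1 - 9 / 10 * (t / x) ^ 2) +
          Real.exp (-4 * y t) * (-(9 / 10 * (2 * (t / x) * (1 / x))))) t := by
      intro t ht
      have h1 := ((hd t ht).hasDerivAt.const_mul (-4)).exp
      have h2 := ((((hasDerivAt_id t).div_const x).pow 2).const_mul (9 / 10 : ℝ)).const_sub 1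
      have := h1.mul h2
      refine this.congr_deriv ?_
      simp
    apply monotoneOn_of_deriv_nonneg (convex_Icc 0 x)
    · have : ContinuousOn y (Icc 0 x) := hy.mono Icc_subset_Ici_self
      fun_prop
    · rw [interior_Icc]
      intro t ht
      exact (hE' t ht.1).differentiableAt.differentiableWithinAt
    · rw [interior_Icc]
      intro t ht
      have ht0 := ht.1
      rw [(hE' t ht0).deriv]
      obtain ⟨h1, h2⟩ := heq t ht0
      have hA : 0 < 1 - 2 * m t / t := by rw [sub_pos, div_lt_one ht0]; exact h1
      have hp : 9 / 20 * (t / x) ^ 2 ≤ m t / t := by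
        rw [le_div_iff₀ ht0, div_pow, mul_div_assoc', div_mul_eq_mul_div, div_le_iff₀ (by positivity)]
        have := hmt t ht0 ht.2.le
        nlinarith
      have hq : m t / t / t ≤ -deriv y t * (1 - 2 * m t / t) := by
        rw [h2]
        have : -(-(1 - 2 * m t / t)⁻¹ * (m t / t ^ 2 + 4 * Real.pi * t * P t)) *
            (1 - 2 * m t / t) = m t / t ^ 2 + 4 * Real.pi * t * P t := by
          have := hA.ne'
          calc _ = (1 - 2 * m t / t)⁻¹ * (1 - 2 * m t / t) *
                (m t / t ^ 2 + 4 * Real.pi * t * P t) := by ring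
            _ = _ := by rw [inv_mul_cancel₀ this, one_mul]
        rw [this, div_div, ← sq]
        have := hP t
        have : 0 ≤ 4 * Real.pi * t * P t := by positivity
        linarith
      have hdn : 0 ≤ -deriv y t := by
        by_contra hcon
        push Not at hcon
        have : 0 ≤ m t / t / t := by have := hm0 t ht0; positivity
        nlinarith
      have h3 : 9 / 20 * (t / x) ^ 2 / t ≤ -deriv y t * (1 - 9 / 10 * (t / x) ^ 2) := by
        calc 9 / 20 * (t / x) ^ 2 / t ≤ m t / t / t := by gcongr
          _ ≤ _ := hq
          _ ≤ _ := by
            apply mul_le_mul_of_nonneg_left _ hdn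
            have : 2 * m t / t = 2 * (m t / t) := by ring
            linarith
      have h4 : 9 / 20 * (t / x) ^ 2 / t = 9 / 20 * ((t / x) * (1 / x)) := by
        field_simp
      rw [h4] at h3
      nlinarith [mul_le_mul_of_nonneg_left h3 (Real.exp_pos (-4 * y t)).le]
  have hρl : ∀ s ∈ Icc 0 x, ρ x * (10 * (s ^ 2 - 9 / 10 / x ^ 2 * s ^ 4)) ≤ ρ s * s ^ 2 := by
    intro s hs
    have h := hE hs (right_mem_Icc.2 hx0.le) hs.2
    simp only [div_self hx0.ne'] at h
    have h5 : Real.exp (4 * y x) * (10 * (1 - 9 / 10 * (s / x) ^ 2)) ≤ Real.exp (4 * y s) := by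
      have e1 : Real.exp (-4 * y s) * Real.exp (4 * y s) = 1 := by
        rw [← Real.exp_add]; simp
      have e2 : Real.exp (-4 * y x) * Real.exp (4 * y x) = 1 := by
        rw [← Real.exp_add]; simp
      have p1 := Real.exp_pos (4 * y s)
      have p2 := Real.exp_pos (4 * y x)
      have := mul_le_mul_of_nonneg_left h (mul_pos p1 p2).le
      generalize Real.exp (-4 * y s) = a at *
      generalize Real.exp (-4 * y x) = b at *
      generalize Real.exp (4 * y s) = c at *
      generalize Real.exp (4 * y x) = d at *
      generalize 1 - 9 / 10 * (s / x) ^ 2 = u at *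
      have l1 : c * d * (a * u) = (a * c) * (d * u) := by ring
      have l2 : c * d * (b * (1 - 9 / 10 * 1 ^ 2)) = (b * d) * (c / 10) := by ring
      rw [l1, l2, e1, e2] at this
      linarith
    have h6 : ρ x * (10 * (1 - 9 / 10 * (s / x) ^ 2)) ≤ ρ s := by
      rw [hρe x hx0.le, hρe s hs.1]
      calc _ = (Real.exp (4 * y x) * (10 * (1 - 9 / 10 * (s / x) ^ 2))) * γ (y x) := by ring
        _ ≤ Real.exp (4 * y s) * γ (y x) := mul_le_mul_of_nonneg_right h5 (hγ0 _)
        _ ≤ _ := mul_le_mul_of_nonneg_left (hγm (hanti hs.1 hx0.le hs.2)) (Real.exp_pos _).le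
    calc _ = ρ x * (10 * (1 - 9 / 10 * (s / x) ^ 2)) * s ^ 2 := by field_simp
      _ ≤ _ := mul_le_mul_of_nonneg_right h6 (sq_nonneg s)
  have hint : ∫ s in (0 : ℝ)..x, ρ x * (10 * (s ^ 2 - 9 / 10 / x ^ 2 * s ^ 4)) ≤
      ∫ s in (0 : ℝ)..x, ρ s * s ^ 2 := by
    apply intervalIntegral.integral_mono_on hx0.le
    · exact Continuous.intervalIntegrable (by fun_prop) _ _
    · exact Continuous.intervalIntegrable (by fun_prop) _ _
    · exact hρl
  have hval : ∫ s in (0 : ℝ)..x, ρ x * (10 * (s ^ 2 - 9 / 10 / x ^ 2 * s ^ 4)) =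
      ρ x * x ^ 3 * (23 / 15) := by
    rw [intervalIntegral.integral_const_mul, intervalIntegral.integral_const_mul,
      intervalIntegral.integral_sub (Continuous.intervalIntegrable (by fun_prop) _ _)
      (Continuous.intervalIntegrable (by fun_prop) _ _), intervalIntegral.integral_const_mul,
      integral_pow, integral_pow]
    field_simp
    norm_num
    ring
  rw [hval] at hint
  have h7 : x * (4 * Real.pi * (ρ x * x ^ 2) * (23 / 15)) ≤ x * (9 / 20) := by
    have := mul_le_mul_of_nonneg_left hint (by positivity : 0 ≤ 4 * Real.pi)
    nlinarith
  have h8 := le_of_mul_le_mul_left h7 hx0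
  show 4 * Real.pi * (ρ x * x ^ 2) - 9 / 20 * 1 < 0
  linarith

/-! ### Comparison of the two solutions -/

/-- Continuous induction on `[0,∞)` for a strict barrier. -/
lemma barrier {w B : ℝ → ℝ} (hw : ContinuousOn w (Ici 0)) (hB : ContinuousOn B (Ici 0))
    (h0 : w 0 < B 0)
    (hstep : ∀ r > 0, (∀ s, 0 ≤ s → s < r → w s ≤ B s) → w r < B r) :
    ∀ r, 0 ≤ r → w r < B r := by
  intro R hR
  by_contra hcon
  push Not at hcon
  set S : Set ℝ := {r ∈ Icc 0 R | B r ≤ w r} with hS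
  have hcl : IsCompact S := by
    apply isCompact_Icc.of_isClosed_subset _ (sep_subset _ _)
    exact isClosed_Icc.isClosed_le (hB.mono Icc_subset_Ici_self) (hw.mono Icc_subset_Ici_self)
  obtain ⟨r0, hr0, hmin⟩ := hcl.exists_isLeast ⟨R, ⟨⟨hR, le_rfl⟩, hcon⟩⟩
  have hpos : 0 < r0 := by
    rcases hr0.1.1.eq_or_lt with h | h
    · have := hr0.2
      rw [← h] at this
      linarith
    · exact h
  have := hstep r0 hpos fun s hs hsr => by
    by_contra hc
    push Not at hc
    exact absurd (hmin ⟨⟨hs, hsr.le.trans hr0.1.2⟩, hc.le⟩) (not_le.2 hsr)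
  exact absurd hr0.2 (not_le.2 this)

lemma abs_exp_sub_le {a b M : ℝ} (ha : a ≤ M) (hb : b ≤ M) :
    |Real.exp a - Real.exp b| ≤ Real.exp M * |a - b| := by
  wlog hab : b ≤ a generalizing a b
  · rw [abs_sub_comm, abs_sub_comm a]
    exact this hb ha (not_le.1 hab).le
  rw [abs_of_nonneg (sub_nonneg.2 (Real.exp_le_exp.2 hab)), abs_of_nonneg (sub_nonneg.2 hab)]
  have h1 := Real.add_one_le_exp (b - a)
  have h2 : Real.exp a * Real.exp (b - a) = Real.exp b := by rw [← Real.exp_add]; congr 1; ring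
  have h3 := Real.exp_le_exp.2 ha
  nlinarith [Real.exp_pos a, mul_le_mul_of_nonneg_left h1 (Real.exp_pos a).le,
    mul_le_mul_of_nonneg_right h3 (sub_nonneg.2 hab)]

/-- Difference of the two right-hand sides `F/A`, given `A, A* ≥ 1/10`. -/
lemma quot_diff {F Fs A As a b f : ℝ} (hA : 1 / 10 ≤ A) (hAs : 1 / 10 ≤ As)
    (hF : |F - Fs| ≤ a) (hAA : |A - As| ≤ b) (hFs : |Fs| ≤ f) :
    |-A⁻¹ * F - -As⁻¹ * Fs| ≤ 10 * a + 100 * (f * b) := by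
  have pA : 0 < A := by linarith
  have pAs : 0 < As := by linarith
  have e : -A⁻¹ * F - -As⁻¹ * Fs = -(A⁻¹ * (F - Fs)) + A⁻¹ * As⁻¹ * (Fs * (A - As)) := by
    field_simp
    ring
  have i1 : A⁻¹ ≤ 10 := by rw [inv_le_comm₀ pA (by norm_num)]; linarith
  have i2 : As⁻¹ ≤ 10 := by rw [inv_le_comm₀ pAs (by norm_num)]; linarith
  have j1 := inv_pos.2 pA
  have j2 := inv_pos.2 pAs
  rw [e]
  refine (abs_add_le _ _).trans ?_
  rw [abs_neg, abs_mul, abs_mul, abs_mul, abs_mul, abs_of_pos j1, abs_of_pos j2]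
  refine add_le_add (mul_le_mul i1 hF (abs_nonneg _) (by norm_num)) ?_
  have k1 : A⁻¹ * As⁻¹ ≤ 100 := by nlinarith
  have k2 : |Fs| * |A - As| ≤ f * b :=
    mul_le_mul hFs hAA (abs_nonneg _) ((abs_nonneg _).trans hFs)
  exact mul_le_mul k1 k2 (by positivity) (by norm_num)

/-- The differential inequality behind the Grönwall argument: a bound `b` for `|y - y*|` on
`[0,r]` controls the difference of the right-hand sides at `r`. -/
lemma rhs_diff {φ : ℝ → ℝ} (hφ : Continuous φ) (hpos : ∀ η, 0 ≤ φ η)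
    (hnorm : 4 * Real.pi * ∫ η in (0 : ℝ)..1, φ η * (1 - η) ^ 3 = 1)
    {L : ℝ} (hL : L = 4 * Real.pi * (∫ η in (0 : ℝ)..1, φ η * (1 - η))) (hL0 : 0 ≤ L)
    {κ : ℝ} {y ys : ℝ → ℝ}
    (hy : ContinuousOn y (Ici 0)) (hys : ContinuousOn ys (Ici 0))
    (hyκ : ∀ s, 0 ≤ s → y s ≤ κ) (hysκ : ∀ s, 0 ≤ s → ys s ≤ κ)
    (hmb : ∀ r, 0 ≤ r → mEV φ y r ≤ 9 / 20 * r) (hmsb : ∀ r, 0 ≤ r → mStar ys r ≤ 9 / 20 * r)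
    {r b : ℝ} (hr : 0 < r) (hb : ∀ s, 0 ≤ s → s ≤ r → |y s - ys s| ≤ b) :
    |-(1 - 2 * mEV φ y r / r)⁻¹ * (mEV φ y r / r ^ 2 + 4 * Real.pi * r * hEV φ (y r)) -
      -(1 - 2 * mStar ys r / r)⁻¹ *
        (mStar ys r / r ^ 2 + 4 * Real.pi * r * (1 / 3 * Real.exp (4 * ys r)))| ≤
      6400 * Real.pi ^ 2 * (L + 4) * (r + Real.exp (4 * κ) * r ^ 3) *
        (Real.exp (2 * κ) + Real.exp (4 * κ) * b) := by
  have hb0 : 0 ≤ b := (abs_nonneg _).trans (hb r hr.le le_rfl)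
  have hπ := Real.pi_gt_three
  set e2 := Real.exp (2 * κ) with he2
  set e4 := Real.exp (4 * κ) with he4
  have e2p : 0 < e2 := Real.exp_pos _
  have e4p : 0 < e4 := Real.exp_pos _
  set Δ := L * e2 + 4 * e4 * b with hΔ
  have hΔ0 : 0 ≤ Δ := by positivity
  have hexp : ∀ s, 0 ≤ s → s ≤ r → |Real.exp (4 * y s) - Real.exp (4 * ys s)| ≤ 4 * e4 * b := by
    intro s h0 hsr
    have h1 := abs_exp_sub_le (a := 4 * y s) (b := 4 * ys s) (M := 4 * κ)
      (by linarith [hyκ s h0]) (by linarith [hysκ s h0])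
    rw [← mul_sub, abs_mul, abs_of_pos (by norm_num : (0 : ℝ) < 4)] at h1
    have := mul_le_mul_of_nonneg_left (hb s h0 hsr) e4p.le
    linarith
  have hee : ∀ z, Real.exp (4 * z) * Real.exp (-2 * z) = Real.exp (2 * z) := by
    intro z; rw [← Real.exp_add]; congr 1; ring
  have hg : ∀ s, 0 ≤ s → s ≤ r → |gEV φ (y s) - Real.exp (4 * ys s)| ≤ Δ := by
    intro s h0 hsr
    have h1 := hexp s h0 hsr
    obtain ⟨d1, d2⟩ := gamEV_defect hφ hpos hnorm (y s)
    rw [← hL] at d2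
    have p := Real.exp_pos (4 * y s)
    have h2 : Real.exp (2 * y s) ≤ e2 := Real.exp_le_exp.2 (by linarith [hyκ s h0])
    have h3 := mul_le_mul_of_nonneg_left d2 p.le
    have h4 := hee (y s)
    have h5 : |gEV φ (y s) - Real.exp (4 * y s)| ≤ L * e2 := by
      rw [gEV_eq hφ, abs_le]
      constructor
      · nlinarith [mul_le_mul_of_nonneg_left h2 hL0]
      · nlinarith [mul_nonneg hL0 e2p.le]
    exact (abs_sub_le _ (Real.exp (4 * y s)) _).trans (add_le_add h5 h1)
  have hh : |hEV φ (y r) - 1 / 3 * Real.exp (4 * ys r)| ≤ Δ := by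
    have h1 := hexp r hr.le le_rfl
    obtain ⟨d1, d2⟩ := chiEV_defect hφ hpos hnorm (y r)
    rw [← hL] at d2
    have p := Real.exp_pos (4 * y r)
    have h2 : Real.exp (2 * y r) ≤ e2 := Real.exp_le_exp.2 (by linarith [hyκ r hr.le])
    have h3 := mul_le_mul_of_nonneg_left d2 p.le
    have h4 := hee (y r)
    have h5 : |hEV φ (y r) - 1 / 3 * Real.exp (4 * y r)| ≤ L * e2 := by
      rw [hEV_eq hφ, abs_le]
      have := mul_nonneg hL0 e2p.le
      constructor
      · nlinarith [mul_le_mul_of_nonneg_left h2 hL0]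
      · nlinarith
    have h6 : |1 / 3 * Real.exp (4 * y r) - 1 / 3 * Real.exp (4 * ys r)| ≤ 4 * e4 * b := by
      rw [← mul_sub, abs_mul, abs_of_pos (by norm_num : (0 : ℝ) < 1 / 3)]
      linarith [abs_nonneg (Real.exp (4 * y r) - Real.exp (4 * ys r))]
    exact (abs_sub_le _ (1 / 3 * Real.exp (4 * y r)) _).trans (add_le_add h5 h6)
  have hyc : ContinuousOn y (uIcc 0 r) := by
    rw [uIcc_of_le hr.le]; exact hy.mono Icc_subset_Ici_self
  have hysc : ContinuousOn ys (uIcc 0 r) := by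
    rw [uIcc_of_le hr.le]; exact hys.mono Icc_subset_Ici_self
  have hgc : Continuous (gEV φ) := by
    rw [show gEV φ = fun z => Real.exp (4 * z) * gamEV φ z from funext (gEV_eq hφ)]
    have := gamEV_continuous hφ
    fun_prop
  have hm : |mEV φ y r - mStar ys r| ≤ 4 * Real.pi * (Δ * r ^ 3) := by
    have i1 : IntervalIntegrable (fun s => gEV φ (y s) * s ^ 2) volume 0 r :=
      ContinuousOn.intervalIntegrable ((hgc.comp_continuousOn hyc).mul (by fun_prop))
    have i2 : IntervalIntegrable (fun s => Real.exp (4 * ys s) * s ^ 2) volume 0 r :=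
      ContinuousOn.intervalIntegrable (by fun_prop)
    unfold mEV mStar
    rw [← mul_sub, ← intervalIntegral.integral_sub i1 i2, abs_mul,
      abs_of_pos (by positivity : 0 < 4 * Real.pi)]
    refine mul_le_mul_of_nonneg_left ?_ (by positivity)
    have := intervalIntegral.norm_integral_le_of_norm_le_const (a := 0) (b := r)
      (C := Δ * r ^ 2) (f := fun s => gEV φ (y s) * s ^ 2 - Real.exp (4 * ys s) * s ^ 2) ?_
    · rw [Real.norm_eq_abs, sub_zero, abs_of_pos hr] at this
      linarith
    · intro s hs
      rw [uIoc_of_le hr.le] at hs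
      rw [Real.norm_eq_abs, ← sub_mul, abs_mul, abs_of_nonneg (sq_nonneg s)]
      exact mul_le_mul (hg s hs.1.le hs.2) (pow_le_pow_left₀ hs.1.le hs.2 2) (sq_nonneg s) hΔ0
  have hms : |mStar ys r| ≤ 4 * Real.pi * (e4 * r ^ 3) := by
    unfold mStar
    rw [abs_mul, abs_of_pos (by positivity : 0 < 4 * Real.pi)]
    refine mul_le_mul_of_nonneg_left ?_ (by positivity)
    have := intervalIntegral.norm_integral_le_of_norm_le_const (a := 0) (b := r)
      (C := e4 * r ^ 2) (f := fun s => Real.exp (4 * ys s) * s ^ 2) ?_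
    · rw [Real.norm_eq_abs, sub_zero, abs_of_pos hr] at this
      linarith
    · intro s hs
      rw [uIoc_of_le hr.le] at hs
      rw [Real.norm_eq_abs, abs_mul, abs_of_nonneg (sq_nonneg s), abs_of_pos (Real.exp_pos _)]
      exact mul_le_mul (Real.exp_le_exp.2 (by linarith [hysκ s hs.1.le]))
        (pow_le_pow_left₀ hs.1.le hs.2 2) (sq_nonneg s) e4p.le
  have hA : 1 / 10 ≤ 1 - 2 * mEV φ y r / r := by
    have : 2 * mEV φ y r / r ≤ 9 / 10 := by rw [div_le_iff₀ hr]; linarith [hmb r hr.le]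
    linarith
  have hAs : 1 / 10 ≤ 1 - 2 * mStar ys r / r := by
    have : 2 * mStar ys r / r ≤ 9 / 10 := by rw [div_le_iff₀ hr]; linarith [hmsb r hr.le]
    linarith
  have hF : |(mEV φ y r / r ^ 2 + 4 * Real.pi * r * hEV φ (y r)) -
      (mStar ys r / r ^ 2 + 4 * Real.pi * r * (1 / 3 * Real.exp (4 * ys r)))| ≤
      8 * Real.pi * r * Δ := by
    rw [show ∀ a b c d : ℝ, (a / r ^ 2 + 4 * Real.pi * r * b) - (c / r ^ 2 + 4 * Real.pi * r * d)
      = (a - c) / r ^ 2 + 4 * Real.pi * r * (b - d) by intros; ring]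
    refine (abs_add_le _ _).trans ?_
    rw [abs_div, abs_mul, abs_of_pos (by positivity : 0 < r ^ 2),
      abs_of_pos (by positivity : 0 < 4 * Real.pi * r)]
    have h1 : |mEV φ y r - mStar ys r| / r ^ 2 ≤ 4 * Real.pi * r * Δ := by
      rw [div_le_iff₀ (by positivity)]; linarith
    have h2 := mul_le_mul_of_nonneg_left hh (by positivity : 0 ≤ 4 * Real.pi * r)
    linarith
  have hAA : |(1 - 2 * mEV φ y r / r) - (1 - 2 * mStar ys r / r)| ≤ 8 * Real.pi * r ^ 2 * Δ := by
    rw [show (1 - 2 * mEV φ y r / r) - (1 - 2 * mStar ys r / r) =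
      -(2 * (mEV φ y r - mStar ys r) / r) by ring, abs_neg, abs_div, abs_mul, abs_two,
      abs_of_pos hr, div_le_iff₀ hr]
    linarith
  have hFs : |mStar ys r / r ^ 2 + 4 * Real.pi * r * (1 / 3 * Real.exp (4 * ys r))| ≤
      8 * Real.pi * r * e4 := by
    refine (abs_add_le _ _).trans ?_
    rw [abs_div, abs_mul, abs_of_pos (by positivity : 0 < r ^ 2),
      abs_of_pos (by positivity : 0 < 4 * Real.pi * r),
      abs_of_pos (by positivity : 0 < 1 / 3 * Real.exp (4 * ys r))]
    have h1 : |mStar ys r| / r ^ 2 ≤ 4 * Real.pi * r * e4 := by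
      rw [div_le_iff₀ (by positivity)]; linarith
    have h3 : Real.exp (4 * ys r) ≤ e4 := Real.exp_le_exp.2 (by linarith [hysκ r hr.le])
    have h2 : 4 * Real.pi * r * (1 / 3 * Real.exp (4 * ys r)) ≤ 4 * Real.pi * r * e4 :=
      mul_le_mul_of_nonneg_left (by linarith) (by positivity)
    linarith
  refine (quot_diff hA hAs hF hAA hFs).trans ?_
  have h1 : Δ ≤ (L + 4) * (e2 + e4 * b) := by
    have : 0 ≤ L * (e4 * b) := by positivity
    rw [hΔ]; nlinarith
  have h2 : 80 * Real.pi * r ≤ 6400 * Real.pi ^ 2 * r := by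
    apply mul_le_mul_of_nonneg_right _ hr.le
    nlinarith
  calc 10 * (8 * Real.pi * r * Δ) + 100 * (8 * Real.pi * r * e4 * (8 * Real.pi * r ^ 2 * Δ))
      = (80 * Real.pi * r + 6400 * Real.pi ^ 2 * (e4 * r ^ 3)) * Δ := by ring
    _ ≤ (6400 * Real.pi ^ 2 * (r + e4 * r ^ 3)) * Δ := by
        apply mul_le_mul_of_nonneg_right _ hΔ0
        linarith
    _ ≤ (6400 * Real.pi ^ 2 * (r + e4 * r ^ 3)) * ((L + 4) * (e2 + e4 * b)) :=
        mul_le_mul_of_nonneg_left h1 (by positivity)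
    _ = _ := by ring

/-- **The ultrarelativistic limit: the massive steady state is captured by the
massless one near the center for large central redshift, quantitatively.** -/
theorem stmt_15 (φ : ℝ → ℝ) (hφcont : Continuous φ)
    (hφC2 : ContDiffOn ℝ 2 φ (Ioi 0))
    (hφ0 : ∀ η : ℝ, η ≤ 0 → φ η = 0) (hφpos : ∀ η : ℝ, 0 < η → 0 < φ η)
    (C η₀ k : ℝ) (hC : 0 < C) (hη₀ : 0 < η₀) (hk : 0 < k) (hk' : k < 3 / 2)
    (hgrowth : ∀ η : ℝ, 0 < η → η < η₀ → C * η ^ k ≤ φ η)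
    (hnorm : 4 * Real.pi * ∫ η in (0 : ℝ)..1, φ η * (1 - η) ^ 3 = 1) :
    ∃ Cb : ℝ, 0 < Cb ∧
      ∀ κ : ℝ, 0 < κ → ∀ y ys : ℝ → ℝ,
        IsEVSteady φ κ y → IsMasslessSteady κ ys →
        ∀ r : ℝ, 0 ≤ r →
          |y r - ys r| ≤ Cb * Real.exp (2 * κ) * (r ^ 2 + Real.exp (4 * κ) * r ^ 4) *
            Real.exp (Cb * (Real.exp (4 * κ) * r ^ 2 + Real.exp (8 * κ) * r ^ 4)) := by
  have hpos : ∀ η, 0 ≤ φ η := fun η => by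
    rcases le_or_gt η 0 with h | h
    · rw [hφ0 η h]
    · exact (hφpos η h).le
  set L := 4 * Real.pi * (∫ η in (0 : ℝ)..1, φ η * (1 - η)) with hL
  have hL0 : 0 ≤ L := mul_nonneg (by positivity) (intervalIntegral.integral_nonneg zero_le_one
    fun η hη => mul_nonneg (hpos η) (sub_nonneg.2 hη.2))
  set K := 6400 * Real.pi ^ 2 * (L + 4) with hK
  have hKp : 0 < K := by positivity
  refine ⟨K, hKp, ?_⟩
  rintro κ - y ys ⟨hyC, hy0, hyeq⟩ ⟨hysC, hys0, hyseq⟩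
  have hyc := hyC.continuousOn
  have hysc := hysC.continuousOn
  have hyd : ∀ r > 0, DifferentiableAt ℝ y r := fun r hr =>
    (hyC.contDiffAt (Ici_mem_nhds hr)).differentiableAt (by norm_num)
  have hysd : ∀ r > 0, DifferentiableAt ℝ ys r := fun r hr =>
    (hysC.contDiffAt (Ici_mem_nhds hr)).differentiableAt (by norm_num)
  have hh0 : ∀ r, 0 ≤ hEV φ (y r) := fun r => by
    rw [hEV_eq hφcont]
    exact mul_nonneg (by positivity) (chiEV_nonneg hpos _)
  have hp0 : ∀ r, 0 ≤ 1 / 3 * Real.exp (4 * ys r) := fun r => by positivity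
  have hmb : ∀ r, 0 ≤ r → mEV φ y r ≤ 9 / 20 * r :=
    buchdahl (γ := gamEV φ) (P := fun r => hEV φ (y r)) (gamEV_continuous hφcont)
      (gamEV_mono hφcont hpos) (gamEV_nonneg hpos) hyc hyd hh0
      (fun r => by simp only [mEV, gEV_eq hφcont]) hyeq
  have hmsb : ∀ r, 0 ≤ r → mStar ys r ≤ 9 / 20 * r :=
    buchdahl (γ := fun _ => 1) (P := fun r => 1 / 3 * Real.exp (4 * ys r)) continuous_const
      monotone_const (fun _ => zero_le_one) hysc hysd hp0
      (fun r => by simp only [mStar, mul_one]) hyseq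
  have hyκ : ∀ s, 0 ≤ s → y s ≤ κ := fun s hs => by
    rw [← hy0]
    refine steady_anti (P := fun r => hEV φ (y r)) hyc hyd hh0 (fun r hr => ?_) hyeq
      self_mem_Ici hs hs
    refine mass_nonneg (ρ := fun s => gEV φ (y s)) (fun s => ?_) hr.le
    rw [gEV_eq hφcont]
    exact mul_nonneg (Real.exp_pos _).le (gamEV_nonneg hpos _)
  have hysκ : ∀ s, 0 ≤ s → ys s ≤ κ := fun s hs => by
    rw [← hys0]
    exact steady_anti (P := fun r => 1 / 3 * Real.exp (4 * ys r)) hysc hysd hp0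
      (fun r hr => mass_nonneg (ρ := fun s => Real.exp (4 * ys s))
        (fun s => (Real.exp_pos _).le) hr.le) hyseq self_mem_Ici hs hs
  set e4 := Real.exp (4 * κ) with he4
  have e4p : 0 < e4 := Real.exp_pos _
  have e24 : Real.exp (2 * κ) * Real.exp (2 * κ) = e4 := by
    rw [← Real.exp_add]; congr 1; ring
  have e8 : Real.exp (8 * κ) = e4 ^ 2 := by
    rw [he4, ← Real.exp_nat_mul]; congr 1; push_cast; ring
  set e2 := Real.exp (2 * κ) with he2
  have e2p : 0 < e2 := Real.exp_pos _
  rw [e8]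
  set Z : ℝ → ℝ := fun r => e4 * r ^ 2 + e4 ^ 2 * r ^ 4 with hZ
  have hZd : ∀ r, HasDerivAt Z (e4 * (2 * r) + e4 ^ 2 * (4 * r ^ 3)) r := fun r => by
    refine (((hasDerivAt_pow 2 r).const_mul e4).add
      ((hasDerivAt_pow 4 r).const_mul (e4 ^ 2))).congr_deriv ?_
    norm_num
  -- `B` solves `B' = K (2r + 4 e4 r³) (e2 + e4 B)` with the positive initial value `ε / e2`.
  have main : ∀ ε > 0, ∀ r, 0 ≤ r →
      |y r - ys r| < e2⁻¹ * ((1 + ε) * Real.exp (K * Z r) - 1) := by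
    intro ε hε
    set B : ℝ → ℝ := fun r => e2⁻¹ * ((1 + ε) * Real.exp (K * Z r) - 1) with hB
    have hBd : ∀ r, HasDerivAt B (K * (2 * r + 4 * e4 * r ^ 3) * (e2 + e4 * B r)) r := fun r => by
      refine (((((hZd r).const_mul K).exp.const_mul (1 + ε)).sub_const 1).const_mul
        e2⁻¹).congr_deriv ?_
      simp only [hB]
      rw [← e24]
      field_simp
      ring
    have hBc : Continuous B := continuous_iff_continuousAt.2 fun r => (hBd r).continuousAt
    have hB0 : B 0 = e2⁻¹ * ε := by simp [hB, hZ]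
    have hBm : ∀ s t, 0 ≤ s → s ≤ t → B s ≤ B t := by
      intro s t hs hst
      simp only [hB, hZ]
      gcongr
    have hBp : ∀ s, 0 ≤ s → 0 < B s := fun s hs => by
      have := hBm 0 s le_rfl hs
      have : 0 < B 0 := by rw [hB0]; positivity
      linarith
    apply barrier (w := fun r => |y r - ys r|) (hyc.sub hysc).abs hBc.continuousOn
    · simp only [hy0, hys0, sub_self, abs_zero]
      exact hBp 0 le_rfl
    intro r hr hs
    have hder : ∀ t, 0 < t → t < r →
        |deriv y t - deriv ys t| ≤ K * (2 * t + 4 * e4 * t ^ 3) * (e2 + e4 * B t) := by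
      intro t ht htr
      have h := rhs_diff hφcont hpos hnorm hL hL0 hyc hysc hyκ hysκ hmb hmsb ht (b := B t)
        (fun s h0 hst => (hs s h0 (hst.trans_lt htr)).trans (hBm s t h0 hst))
      rw [(hyeq t ht).2, (hyseq t ht).2]
      refine h.trans ?_
      have := hBp t ht.le
      apply mul_le_mul_of_nonneg_right _ (by positivity)
      apply mul_le_mul_of_nonneg_left _ hKp.le
      have : 0 ≤ e4 * t ^ 3 := by positivity
      linarith
    have mono : ∀ σ : ℝ, (σ = 1 ∨ σ = -1) → B 0 ≤ B r - σ * (y r - ys r) := by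
      intro σ hσ
      have hm : MonotoneOn (fun t => B t - σ * (y t - ys t)) (Icc 0 r) := by
        have hd : ∀ t > 0, HasDerivAt (fun t => B t - σ * (y t - ys t))
            (K * (2 * t + 4 * e4 * t ^ 3) * (e2 + e4 * B t) - σ * (deriv y t - deriv ys t)) t :=
          fun t ht => (hBd t).sub
            (((hyd t ht).hasDerivAt.sub (hysd t ht).hasDerivAt).const_mul σ)
        apply monotoneOn_of_deriv_nonneg (convex_Icc 0 r)
        · exact hBc.continuousOn.sub
            (continuousOn_const.mul ((hyc.sub hysc).mono Icc_subset_Ici_self))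
        · rw [interior_Icc]
          exact fun t ht => (hd t ht.1).differentiableAt.differentiableWithinAt
        · rw [interior_Icc]
          intro t ht
          rw [(hd t ht.1).deriv]
          have := abs_le.1 (hder t ht.1 ht.2)
          rcases hσ with rfl | rfl <;> linarith
      have := hm (left_mem_Icc.2 hr.le) (right_mem_Icc.2 hr.le) hr.le
      simpa only [hy0, hys0, sub_self, mul_zero, sub_zero] using this
    have h1 := mono 1 (Or.inl rfl)
    have h2 := mono (-1) (Or.inr rfl)
    have h3 := hBp 0 le_rfl
    simp only [abs_lt]
    constructor <;> linarith
  intro r hr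
  have hlim : |y r - ys r| ≤ e2⁻¹ * ((1 + 0) * Real.exp (K * Z r) - 1) := by
    have ht : Tendsto (fun ε : ℝ => e2⁻¹ * ((1 + ε) * Real.exp (K * Z r) - 1)) (𝓝[>] 0)
        (𝓝 (e2⁻¹ * ((1 + 0) * Real.exp (K * Z r) - 1))) :=
      (Continuous.tendsto (by fun_prop) 0).mono_left nhdsWithin_le_nhds
    refine ge_of_tendsto ht ?_
    filter_upwards [self_mem_nhdsWithin] with ε hε
    exact (main ε hε r hr).le
  refine hlim.trans ?_
  have h1 : (1 + 0) * Real.exp (K * Z r) - 1 ≤ K * Z r * Real.exp (K * Z r) := by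
    have h2 := Real.add_one_le_exp (-(K * Z r))
    have h3 : Real.exp (-(K * Z r)) * Real.exp (K * Z r) = 1 := by rw [← Real.exp_add]; simp
    nlinarith [Real.exp_pos (K * Z r)]
  calc _ ≤ e2⁻¹ * (K * Z r * Real.exp (K * Z r)) :=
        mul_le_mul_of_nonneg_left h1 (inv_pos.2 e2p).le
    _ = K * e2 * (r ^ 2 + e4 * r ^ 4) * Real.exp (K * Z r) := by
        have : Z r = e2 * (e2 * (r ^ 2 + e4 * r ^ 4)) := by
          simp only [hZ]; rw [← e24]; ring
        rw [← mul_assoc]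
        congr 1
        rw [this]
        field_simp
end
end

section
/- Let y*_κ ∈ C¹([0,∞)) denote the unique solution of the massless Einstein–Vlasov steady state equation y'(r) = −(1 − 2m*(r)/r)^{−1} (m*(r)/r² + 4π r h*(y(r))), m*(r) = 4π ∫₀^r g*(y(s)) s² ds, with y*_κ(0) = κ, where g*(y) = e^{4y} and h*(y) = (1/3)e^{4y}. Then the family obeys the scaling law: for all κ > 0 and all r ≥ 0, y*_κ(r) = κ + y*_0(e^{2κ} r), where y*_0 is the solution with initial value y*_0(0) = 0. -/
/-!
The rescaled function `z(r) = κ + y₀(e^{2κ} r)` satisfies `m_z(r) = e^{-2κ} m_{y₀}(e^{2κ} r)`, so it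
solves the same equation with `z(0) = κ` (`IsMasslessSteady.scale`); the claim is then uniqueness of
the solution with given central value (`IsMasslessSteady.unique`).

Uniqueness is not immediate because the equation is singular at the centre. With the mean field
`n = m / r²` it becomes the system
`y' = -(n + (4π/3) r e^{4y}) / (1 - 2 r n)`, `n' = 4π e^{4y} - 2 n / r`.
The first right-hand side is locally Lipschitz up to `r = 0`, and the only singular term `-2 n / r` is
linear with a favourable sign. Hence for two solutions the energy `(y₁ - y₂)² + (n₁ - n₂)²` obeys
`E' ≤ C E` on every `(0, R)`; it is continuous on `[0, R]` and vanishes at `0`, so it vanishes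
identically by Grönwall's argument.
-/

open MeasureTheory Set Filter Topology
open scoped ENNReal

noncomputable section

/-- The field `n = m* / r²`. At `r = 0` the convention `x / 0 = 0` gives `n(0) = 0`, which is the
continuous extension. -/
def nStar (y : ℝ → ℝ) (r : ℝ) : ℝ := mStar y r / r ^ 2

lemma continuousOn_massDensity {y : ℝ → ℝ} (hy : ContinuousOn y (Ici 0)) :
    ContinuousOn (fun s => Real.exp (4 * y s) * s ^ 2) (Ici 0) := by
  fun_prop

lemma intervalIntegrable_massDensity {y : ℝ → ℝ} (hy : ContinuousOn y (Ici 0)) {r : ℝ}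
    (hr : 0 ≤ r) :
    IntervalIntegrable (fun s => Real.exp (4 * y s) * s ^ 2) volume 0 r := by
  apply ContinuousOn.intervalIntegrable
  rw [uIcc_of_le hr]
  exact (continuousOn_massDensity hy).mono Icc_subset_Ici_self

lemma hasDerivAt_mStar {y : ℝ → ℝ} (hy : ContinuousOn y (Ici 0)) {r : ℝ} (hr : 0 < r) :
    HasDerivAt (mStar y) (4 * Real.pi * (Real.exp (4 * y r) * r ^ 2)) r := by
  have hc := continuousOn_massDensity hy
  refine (intervalIntegral.integral_hasDerivAt_right
    (intervalIntegrable_massDensity hy hr.le) ?_ ?_).const_mul (4 * Real.pi)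
  · exact (hc.mono Ioi_subset_Ici_self).stronglyMeasurableAtFilter isOpen_Ioi r hr
  · exact hc.continuousAt (Ici_mem_nhds hr)

lemma hasDerivAt_nStar {y : ℝ → ℝ} (hy : ContinuousOn y (Ici 0)) {r : ℝ} (hr : 0 < r) :
    HasDerivAt (nStar y) (4 * Real.pi * Real.exp (4 * y r) - 2 * nStar y r / r) r := by
  have h := (hasDerivAt_mStar hy hr).div (hasDerivAt_pow 2 r) (by positivity)
  refine h.congr_deriv ?_
  unfold nStar
  have := hr.ne'
  field_simp
  push_cast
  ring

/-- Continuity at the centre comes from the bound `m(r) ≤ C r³`. -/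
lemma continuousOn_nStar {y : ℝ → ℝ} (hy : ContinuousOn y (Ici 0)) :
    ContinuousOn (nStar y) (Ici 0) := by
  intro r hr
  rcases (mem_Ici.1 hr).eq_or_lt with rfl | hr
  · obtain ⟨B, hB⟩ := (isCompact_Icc (a := (0 : ℝ)) (b := 1)).exists_bound_of_continuousOn
      (f := fun s => Real.exp (4 * y s))
      ((by fun_prop : ContinuousOn (fun s => Real.exp (4 * y s)) (Ici 0)).mono Icc_subset_Ici_self)
    have hn0 : nStar y 0 = 0 := by simp [nStar]
    have hlim : Tendsto (fun r : ℝ => 4 * Real.pi * B * r) (𝓝[Ici 0] 0) (𝓝 0) := by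
      have : Continuous (fun r : ℝ => 4 * Real.pi * B * r) := by fun_prop
      simpa using (this.tendsto 0).mono_left nhdsWithin_le_nhds
    unfold ContinuousWithinAt
    rw [hn0]
    refine squeeze_zero_norm' ?_ hlim
    filter_upwards [self_mem_nhdsWithin, mem_nhdsWithin_of_mem_nhds (Iio_mem_nhds one_pos)]
      with r hr hr1
    rcases (mem_Ici.1 hr).eq_or_lt with rfl | hr
    · simp [hn0]
    have hI : ‖∫ s in (0 : ℝ)..r, Real.exp (4 * y s) * s ^ 2‖ ≤ B * r ^ 2 * |r - 0| := by
      apply intervalIntegral.norm_integral_le_of_norm_le_const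
      intro s hs
      rw [uIoc_of_le hr.le] at hs
      have h1 := hB s ⟨hs.1.le, hs.2.trans (le_of_lt hr1)⟩
      rw [norm_mul, norm_pow, Real.norm_of_nonneg hs.1.le]
      exact mul_le_mul h1 (pow_le_pow_left₀ hs.1.le hs.2 2) (by have := hs.1; positivity)
        ((norm_nonneg _).trans h1)
    rw [sub_zero, abs_of_pos hr] at hI
    have hp : 0 < 4 * Real.pi := by positivity
    rw [nStar, mStar, norm_div, norm_mul, Real.norm_of_nonneg hp.le,
      Real.norm_of_nonneg (by positivity : 0 ≤ r ^ 2), div_le_iff₀ (by positivity)]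
    calc _ ≤ 4 * Real.pi * (B * r ^ 2 * r) := mul_le_mul_of_nonneg_left hI hp.le
      _ = _ := by ring
  · exact (hasDerivAt_nStar hy hr).continuousAt.continuousWithinAt

lemma IsMasslessSteady.hasDerivAt {κ : ℝ} {y : ℝ → ℝ} (h : IsMasslessSteady κ y) {r : ℝ}
    (hr : 0 < r) :
    HasDerivAt y (-((nStar y r + 4 * Real.pi / 3 * r * Real.exp (4 * y r)) /
      (1 - 2 * r * nStar y r))) r := by
  have hd : DifferentiableAt ℝ y r :=
    (h.1.differentiableOn (by norm_num)).differentiableAt (Ici_mem_nhds hr)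
  refine hd.hasDerivAt.congr_deriv ?_
  rw [(h.2.2 r hr).2, nStar]
  have : 2 * r * (mStar y r / r ^ 2) = 2 * mStar y r / r := by
    have := hr.ne'
    field_simp
  rw [this]
  ring

lemma IsMasslessSteady.pos {κ : ℝ} {y : ℝ → ℝ} (h : IsMasslessSteady κ y) {r : ℝ}
    (hr : 0 ≤ r) : 0 < 1 - 2 * r * nStar y r := by
  rcases hr.eq_or_lt with rfl | hr
  · simp
  · have : 2 * r * nStar y r = 2 * mStar y r / r := by
      have := hr.ne'
      rw [nStar]
      field_simp
    rw [this, sub_pos, div_lt_one hr]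
    exact (h.2.2 r hr).1

lemma abs_exp_sub_exp_le (a b : ℝ) :
    |Real.exp a - Real.exp b| ≤ (Real.exp a + Real.exp b) * |a - b| := by
  -- the tangent line inequality `exp u * (v - u + 1) ≤ exp v`
  have key : ∀ u v : ℝ, Real.exp u - Real.exp v ≤ (Real.exp u + Real.exp v) * |u - v| := by
    intro u v
    have h1 : Real.exp v = Real.exp u * Real.exp (v - u) := by rw [← Real.exp_add]; ring_nf
    have h2 := mul_le_mul_of_nonneg_left (Real.add_one_le_exp (v - u)) (Real.exp_pos u).le
    have h3 := mul_le_mul_of_nonneg_left (le_abs_self (u - v)) (Real.exp_pos u).le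
    have h4 := mul_nonneg (Real.exp_pos v).le (abs_nonneg (u - v))
    nlinarith
  refine abs_sub_le_iff.2 ⟨key a b, ?_⟩
  have := key b a
  rwa [abs_sub_comm, add_comm] at this

/-- The Grönwall estimate `E' ≤ C E` in algebraic form: `u`, `ν`, `ε` are the differences of `y`, `n`
and `e^{4y}`, and `-(a ν + b ε)` is the difference of the two values of `y'`. -/
lemma energy_deriv_le {r u ν ε a b A B L : ℝ} (hr : 0 < r) (ha : |a| ≤ A) (hb : |b| ≤ B)
    (hε : |ε| ≤ L * |u|) (hL : 0 ≤ L) :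
    2 * u * (-(a * ν + b * ε)) + 2 * ν * (4 * Real.pi * ε - 2 * ν / r) ≤
      (A + 2 * B * L + 4 * Real.pi * L) * (u ^ 2 + ν ^ 2) := by
  have hp := Real.pi_pos
  have hA := (abs_nonneg a).trans ha
  have hB := (abs_nonneg b).trans hb
  have hs : 0 ≤ 4 * (ν ^ 2 / r) := by positivity
  have hy : 2 * (|u| * |ν|) ≤ u ^ 2 + ν ^ 2 := by
    nlinarith [sq_nonneg (|u| - |ν|), sq_abs u, sq_abs ν]
  have h1 : -(u * (a * ν)) ≤ A * (|u| * |ν|) := by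
    refine (neg_le_abs _).trans ?_
    rw [abs_mul, abs_mul]
    calc |u| * (|a| * |ν|) = |a| * (|u| * |ν|) := by ring
      _ ≤ _ := by gcongr
  have h2 : -(u * (b * ε)) ≤ B * L * u ^ 2 := by
    refine (neg_le_abs _).trans ?_
    rw [abs_mul, abs_mul]
    calc |u| * (|b| * |ε|) ≤ |u| * (B * (L * |u|)) := by gcongr
      _ = B * L * |u| ^ 2 := by ring
      _ = _ := by rw [sq_abs]
  have h3 : ν * ε ≤ L * (|u| * |ν|) := by
    refine (le_abs_self _).trans ?_
    rw [abs_mul]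
    calc |ν| * |ε| ≤ |ν| * (L * |u|) := by gcongr
      _ = _ := by ring
  have h1' := mul_le_mul_of_nonneg_left hy hA
  have h3' := mul_le_mul_of_nonneg_left hy (by positivity : 0 ≤ 4 * Real.pi * L)
  have h3'' := mul_le_mul_of_nonneg_left h3 (by positivity : 0 ≤ 8 * Real.pi)
  have h4 : 0 ≤ B * L * ν ^ 2 := by positivity
  calc _ = 2 * -(u * (a * ν)) + 2 * -(u * (b * ε)) + 8 * Real.pi * (ν * ε)
        - 4 * (ν ^ 2 / r) := by ring
    _ ≤ _ := by nlinarith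

/-- Uniqueness of the steady state with prescribed central value. -/
lemma IsMasslessSteady.unique {κ : ℝ} {y₁ y₂ : ℝ → ℝ} (h₁ : IsMasslessSteady κ y₁)
    (h₂ : IsMasslessSteady κ y₂) {R : ℝ} (hR : 0 ≤ R) : y₁ R = y₂ R := by
  have hc₁ := h₁.1.continuousOn
  have hc₂ := h₂.1.continuousOn
  have hn₁ := continuousOn_nStar hc₁
  have hn₂ := continuousOn_nStar hc₂
  -- `a`, `b` are the divided-difference coefficients in
  -- `y₁' - y₂' = -(a (n₁ - n₂) + b (e^{4y₁} - e^{4y₂}))`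
  let a : ℝ → ℝ := fun r => 1 / (1 - 2 * r * nStar y₁ r) +
    2 * r * (nStar y₂ r + 4 * Real.pi / 3 * r * Real.exp (4 * y₂ r)) /
      ((1 - 2 * r * nStar y₁ r) * (1 - 2 * r * nStar y₂ r))
  let b : ℝ → ℝ := fun r => 4 * Real.pi / 3 * r / (1 - 2 * r * nStar y₁ r)
  let l : ℝ → ℝ := fun r => Real.exp (4 * y₁ r) + Real.exp (4 * y₂ r)
  have hne₁ : ∀ r ∈ Ici (0 : ℝ), 1 - 2 * r * nStar y₁ r ≠ 0 := fun r hr => (h₁.pos hr).ne'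
  have hne₂ : ∀ r ∈ Ici (0 : ℝ), 1 - 2 * r * nStar y₂ r ≠ 0 := fun r hr => (h₂.pos hr).ne'
  have hca : ContinuousOn a (Ici 0) := by
    refine ContinuousOn.add (ContinuousOn.div (by fun_prop) (by fun_prop) hne₁)
      (ContinuousOn.div (by fun_prop) (by fun_prop) fun r hr => mul_ne_zero (hne₁ r hr) (hne₂ r hr))
  have hcb : ContinuousOn b (Ici 0) := ContinuousOn.div (by fun_prop) (by fun_prop) hne₁
  have hcl : ContinuousOn l (Ici 0) := by fun_prop
  have hsub : Icc 0 R ⊆ Ici (0 : ℝ) := Icc_subset_Ici_self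
  obtain ⟨A, hA⟩ := isCompact_Icc.exists_bound_of_continuousOn (hca.mono hsub)
  obtain ⟨B, hB⟩ := isCompact_Icc.exists_bound_of_continuousOn (hcb.mono hsub)
  obtain ⟨M, hM⟩ := isCompact_Icc.exists_bound_of_continuousOn (hcl.mono hsub)
  have hM0 : 0 ≤ M := (norm_nonneg _).trans (hM 0 ⟨le_rfl, hR⟩)
  let C := A + 2 * B * (4 * M) + 4 * Real.pi * (4 * M)
  let E : ℝ → ℝ := fun r => (y₁ r - y₂ r) ^ 2 + (nStar y₁ r - nStar y₂ r) ^ 2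
  have hanti : AntitoneOn (fun r => E r * Real.exp (-(C * r))) (Icc 0 R) := by
    have hcE : ContinuousOn (fun r => E r * Real.exp (-(C * r))) (Ici 0) := by
      simp only [E]; fun_prop
    refine antitoneOn_of_hasDerivWithinAt_nonpos (convex_Icc 0 R) (hcE.mono hsub)
      (f' := fun r => (deriv E r - C * E r) * Real.exp (-(C * r))) ?_ ?_
    all_goals
      intro r hr
      rw [interior_Icc] at hr
      have hr0 : 0 < r := hr.1
      have hE := (((h₁.hasDerivAt hr0).sub (h₂.hasDerivAt hr0)).pow 2).add
        (((hasDerivAt_nStar hc₁ hr0).sub (hasDerivAt_nStar hc₂ hr0)).pow 2)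
      change HasDerivAt E _ r at hE
      rw [hE.deriv]
    · have hexp : HasDerivAt (fun r => Real.exp (-(C * r))) (Real.exp (-(C * r)) * -(C * 1)) r :=
        (((hasDerivAt_id r).const_mul C).neg).exp
      refine ((hE.mul hexp).congr_deriv ?_).hasDerivWithinAt
      ring
    · refine mul_nonpos_of_nonpos_of_nonneg (sub_nonpos.2 ?_) (Real.exp_pos _).le
      have hrI : r ∈ Icc 0 R := Ioo_subset_Icc_self hr
      have hε : |Real.exp (4 * y₁ r) - Real.exp (4 * y₂ r)| ≤ 4 * M * |y₁ r - y₂ r| := by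
        refine (abs_exp_sub_exp_le _ _).trans ?_
        rw [← mul_sub, abs_mul, abs_of_pos (by norm_num : (0 : ℝ) < 4)]
        have := mul_le_mul_of_nonneg_right ((le_abs_self _).trans (hM r hrI))
          (abs_nonneg (y₁ r - y₂ r))
        simp only [l] at this
        linarith
      refine le_trans (le_of_eq ?_) (energy_deriv_le (ν := nStar y₁ r - nStar y₂ r) hr0 (hA r hrI)
        (hB r hrI) hε (by positivity))
      have e₁ := hne₁ r hr0.le
      have e₂ := hne₂ r hr0.le
      have hdiff : -((nStar y₁ r + 4 * Real.pi / 3 * r * Real.exp (4 * y₁ r)) /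
            (1 - 2 * r * nStar y₁ r)) -
          -((nStar y₂ r + 4 * Real.pi / 3 * r * Real.exp (4 * y₂ r)) /
            (1 - 2 * r * nStar y₂ r)) =
          -(a r * (nStar y₁ r - nStar y₂ r) +
            b r * (Real.exp (4 * y₁ r) - Real.exp (4 * y₂ r))) := by
        simp only [a, b]
        obtain ⟨d₁, hd₁⟩ : ∃ d, d = 1 - 2 * r * nStar y₁ r := ⟨_, rfl⟩
        obtain ⟨d₂, hd₂⟩ : ∃ d, d = 1 - 2 * r * nStar y₂ r := ⟨_, rfl⟩
        rw [← hd₁] at e₁ ⊢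
        rw [← hd₂] at e₂ ⊢
        field_simp
        rw [hd₁, hd₂]
        ring
      simp only [Pi.sub_apply]
      rw [hdiff]
      push_cast
      ring
  have hE0 : E 0 = 0 := by simp [E, nStar, h₁.2.1, h₂.2.1]
  have hfin := hanti ⟨le_rfl, hR⟩ ⟨hR, le_rfl⟩ hR
  simp only [hE0, zero_mul] at hfin
  have hER : E R ≤ 0 := nonpos_of_mul_nonpos_left hfin (Real.exp_pos _)
  have : (y₁ R - y₂ R) ^ 2 = 0 :=
    le_antisymm (by simp only [E] at hER; nlinarith [sq_nonneg (nStar y₁ R - nStar y₂ R)])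
      (sq_nonneg _)
  exact sub_eq_zero.1 (pow_eq_zero_iff two_ne_zero |>.1 this)

lemma mStar_scale (κ : ℝ) (y : ℝ → ℝ) (r : ℝ) :
    mStar (fun r => κ + y (Real.exp (2 * κ) * r)) r =
      mStar y (Real.exp (2 * κ) * r) / Real.exp (2 * κ) := by
  set a := Real.exp (2 * κ) with ha
  have ha0 : a ≠ 0 := (Real.exp_pos _).ne'
  have hpt : ∀ s, Real.exp (4 * (κ + y (a * s))) * s ^ 2 =
      Real.exp (4 * y (a * s)) * (a * s) ^ 2 := by
    intro s
    have : Real.exp (4 * (κ + y (a * s))) = a ^ 2 * Real.exp (4 * y (a * s)) := by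
      rw [ha, ← Real.exp_nat_mul, ← Real.exp_add]
      congr 1
      push_cast
      ring
    rw [this]
    ring
  simp only [mStar, hpt]
  rw [intervalIntegral.integral_comp_mul_left (fun s => Real.exp (4 * y s) * s ^ 2) ha0]
  rw [mul_zero, smul_eq_mul]
  ring

lemma IsMasslessSteady.scale (κ : ℝ) {y : ℝ → ℝ} (h : IsMasslessSteady 0 y) :
    IsMasslessSteady κ (fun r => κ + y (Real.exp (2 * κ) * r)) := by
  have ha0 : 0 < Real.exp (2 * κ) := Real.exp_pos _
  refine ⟨?_, by simp [h.2.1], fun r hr => ?_⟩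
  · refine contDiffOn_const.add (h.1.comp (contDiff_const.mul contDiff_id).contDiffOn ?_)
    intro r hr
    exact mul_nonneg ha0.le hr
  · have hexp : Real.exp (4 * (κ + y (Real.exp (2 * κ) * r))) =
        Real.exp (2 * κ) ^ 2 * Real.exp (4 * y (Real.exp (2 * κ) * r)) := by
      rw [← Real.exp_nat_mul, ← Real.exp_add]
      congr 1
      push_cast
      ring
    rw [mStar_scale]
    obtain ⟨hlt, hder⟩ := h.2.2 (Real.exp (2 * κ) * r) (mul_pos ha0 hr)
    refine ⟨?_, ?_⟩
    · rw [← mul_div_assoc, div_lt_iff₀ ha0]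
      linarith
    · rw [deriv_const_add, deriv_comp_mul_left (Real.exp (2 * κ)) y r, hder, hexp, smul_eq_mul]
      have e : 2 * (mStar y (Real.exp (2 * κ) * r) / Real.exp (2 * κ)) / r =
          2 * mStar y (Real.exp (2 * κ) * r) / (Real.exp (2 * κ) * r) := by
        have := hr.ne'
        field_simp
      rw [e]
      have := hr.ne'
      generalize (1 - 2 * mStar y (Real.exp (2 * κ) * r) / (Real.exp (2 * κ) * r))⁻¹ = q
      generalize mStar y (Real.exp (2 * κ) * r) = m
      generalize Real.exp (4 * y (Real.exp (2 * κ) * r)) = w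
      generalize Real.exp (2 * κ) = a at *
      field_simp

/-- **Scaling invariance of the massless Einstein–Vlasov steady states:**
`y*_κ(r) = κ + y*_0(e^{2κ} r)`. -/
theorem stmt_16 (κ : ℝ) (hκ : 0 < κ) (y0 yk : ℝ → ℝ)
    (h0 : IsMasslessSteady 0 y0) (hk : IsMasslessSteady κ yk) :
    ∀ r : ℝ, 0 ≤ r → yk r = κ + y0 (Real.exp (2 * κ) * r) := by
  intro r hr
  exact hk.unique (h0.scale κ) hr
end
end
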